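/- arXiv:1310.2858 — 3 statements merged into one kernel-verified Lean document; each statement's English description precedes it below -/
import Mathlib

section
/- For every k-cd c̄ for n nodes (n ≥ 1) and every m ∈ M(c̄), it holds that μ_m(c̄) = c_m·(1 + γ(c̄) + α(c̄)). -/
open Finset

/-- The color appearing at least twice among `x, y, z`, or `x` if all three are distinct. -/
def maj3 {k : ℕ} (x y z : Fin k) : Fin k := if y = z then y else x

/-- Number of nodes with color `j` in the assignment `a`. -/
def cnt {n k : ℕ} (a : Fin n → Fin k) (j : Fin k) : ℕ :=
  (Finset.univ.filter (fun i => a i = j)).card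

/-- One sample for a round of the 3-majority dynamics: each node picks three nodes
(uniformly at random, with replacement). -/
abbrev Sample (n : ℕ) := Fin n → Fin n × Fin n × Fin n

/-- The assignment obtained from `a` after one step of the 3-majority dynamics with samples `S`. -/
def stepA {n k : ℕ} (a : Fin n → Fin k) (S : Sample n) : Fin n → Fin k :=
  fun i => maj3 (a (S i).1) (a (S i).2.1) (a (S i).2.2)

/-- Probability that the event `E` holds for the configuration obtained from `a`
after one step of the 3-majority dynamics (samples are uniform and independent). -/
noncomputable def stepPr {n k : ℕ} (a : Fin n → Fin k) (E : (Fin n → Fin k) → Prop) : ℝ :=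
  (Nat.card {S : Sample n // E (stepA a S)} : ℝ) / (Nat.card (Sample n) : ℝ)

/-- Expectation of `f` of the configuration obtained from `a` after one step of the
3-majority dynamics. -/
noncomputable def stepE {n k : ℕ} (a : Fin n → Fin k) (f : (Fin n → Fin k) → ℝ) : ℝ :=
  (∑ S : Sample n, f (stepA a S)) / (Nat.card (Sample n) : ℝ)

/-- `m(c̄)`: the size of the largest color class. -/
def mval {k : ℕ} (c : Fin k → ℕ) : ℕ := Finset.univ.sup c

/-- `M(c̄)`: the set of colors attaining the maximum. -/
def Mset {k : ℕ} (c : Fin k → ℕ) : Finset (Fin k) :=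
  Finset.univ.filter (fun j => c j = mval c)

/-- `s(c̄)`: the bias, i.e. the gap between the (unique) maximum and the second largest
color class; `0` if the maximum is not unique. -/
def sval {k : ℕ} (c : Fin k → ℕ) : ℕ :=
  if (Mset c).card = 1 then mval c - (Finset.univ \ Mset c).sup c else 0

/-- `α(c̄) = (n − m(c̄))·s(c̄)/n²`. -/
noncomputable def alphaV (n : ℕ) {k : ℕ} (c : Fin k → ℕ) : ℝ :=
  ((n : ℝ) - mval c) * sval c / (n : ℝ) ^ 2

/-- `γ(c̄) = (n·m(c̄) − Σ_h c_h²)/n² − α(c̄)`. -/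
noncomputable def gammaV (n : ℕ) {k : ℕ} (c : Fin k → ℕ) : ℝ :=
  ((n : ℝ) * mval c - ∑ h, (c h : ℝ) ^ 2) / (n : ℝ) ^ 2 - alphaV n c

/-- The trajectory of the 3-majority dynamics started at `a`, driven by the samples `S`
for the first `N` rounds. -/
def trajA {n k N : ℕ} (a : Fin n → Fin k) (S : Fin N → Sample n) : ℕ → Fin n → Fin k
  | 0 => a
  | t + 1 => if h : t < N then stepA (trajA a S t) (S ⟨t, h⟩) else trajA a S t

/-- Probability of an event `E` for an `N`-round run of the 3-majority dynamics
(all samples of all rounds are uniform and independent). -/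
noncomputable def runPr {n k : ℕ} (N : ℕ) (a : Fin n → Fin k)
    (E : (Fin N → Sample n) → Prop) : ℝ :=
  (Nat.card {S : Fin N → Sample n // E S} : ℝ) / (Nat.card (Fin N → Sample n) : ℝ)

/-!
Exchanging the expectation with the sum over nodes, `μ_j` is `n` times the probability that one
node adopts `j`. With samples `(x, y, z)`, this happens iff `y` and `z` both have color `j`, or `y`
and `z` disagree and `x` has color `j`. The first case has probability `(c_j / n)²` and the second
`(c_j / n) · (1 - Σ_h c_h² / n²)`, so `μ_j = c_j · (1 + (n · c_j - Σ_h c_h²) / n²)`; for `j ∈ M(c̄)`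
the fraction is `γ(c̄) + α(c̄)`.
-/

open scoped BigOperators

section UniformSampling

variable {ι κ : Type*} [Fintype ι] [DecidableEq ι] [Fintype κ]

theorem expect_comp_eval {M : Type*} [AddCommMonoid M] [Module ℚ≥0 M] (i : ι) (f : κ → M) :
    𝔼 S : ι → κ, f (S i) = 𝔼 t, f t := by
  have : Nonempty ι := ⟨i⟩
  rcases isEmpty_or_nonempty κ with _ | _
  · simp
  calc 𝔼 S : ι → κ, f (S i)
      = 𝔼 q : κ × ({j // j ≠ i} → κ), f q.1 :=
        Fintype.expect_equiv (Equiv.funSplitAt i κ) _ _ fun _ => rfl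
    _ = 𝔼 t, 𝔼 _S : {j // j ≠ i} → κ, f t := by
        rw [← univ_product_univ, expect_product]
    _ = 𝔼 t, f t := by
        simp only [Fintype.expect_const]

theorem expect_card_filter_apply {K : Type*} [Semifield K] [CharZero K] (p : κ → Prop)
    [DecidablePred p] :
    𝔼 S : ι → κ, (#{i | p (S i)} : K) = Fintype.card ι * (#{t | p t} / Fintype.card κ) := by
  calc 𝔼 S : ι → κ, (#{i | p (S i)} : K)
      = ∑ i, 𝔼 S : ι → κ, if p (S i) then (1 : K) else 0 := by
        simp only [← expect_sum_comm, sum_boole]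
    _ = ∑ _i : ι, 𝔼 t, if p t then (1 : K) else 0 :=
        sum_congr rfl fun i _ => expect_comp_eval i fun t => if p t then (1 : K) else 0
    _ = Fintype.card ι * (#{t | p t} / Fintype.card κ) := by
        simp only [Fintype.expect_eq_sum_div_card, sum_boole, sum_const, card_univ, nsmul_eq_mul]

end UniformSampling

section Counting

variable {ι : Type*} [Fintype ι]

theorem card_filter_apply_fst_eq_apply_snd {κ : Type*} [Fintype κ] [DecidableEq κ] (f : ι → κ) :
    #{q : ι × ι | f q.1 = f q.2} = ∑ h, #{i | f i = h} ^ 2 := by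
  rw [card_eq_sum_card_fiberwise (f := fun q => f q.1) (t := univ) (by simp)]
  refine sum_congr rfl fun h _ => ?_
  rw [sq, ← card_product]
  congr 1
  ext q
  grind

theorem card_filter_apply_fst_ne_add_sum_sq {κ : Type*} [Fintype κ] [DecidableEq κ] (f : ι → κ) :
    #{q : ι × ι | f q.1 ≠ f q.2} + ∑ h, #{i | f i = h} ^ 2 = Fintype.card ι ^ 2 := by
  rw [← card_filter_apply_fst_eq_apply_snd, add_comm, card_filter_add_card_filter_not, card_univ,
    Fintype.card_prod, sq]

theorem maj3_eq_iff {k : ℕ} {x y z j : Fin k} :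
    maj3 x y z = j ↔ (y = j ∧ z = j) ∨ (x = j ∧ y ≠ z) := by
  grind [maj3]

theorem card_filter_maj3_eq {k : ℕ} (f : ι → Fin k) (j : Fin k) :
    #{t : ι × ι × ι | maj3 (f t.1) (f t.2.1) (f t.2.2) = j} =
      Fintype.card ι * #{i | f i = j} ^ 2 +
        #{i | f i = j} * #{q : ι × ι | f q.1 ≠ f q.2} := by
  classical
  let A : Finset ι := {i | f i = j}
  let D : Finset (ι × ι) := {q | f q.1 ≠ f q.2}
  have hsplit : ({t | maj3 (f t.1) (f t.2.1) (f t.2.2) = j} : Finset (ι × ι × ι)) =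
      (univ : Finset ι) ×ˢ A ×ˢ A ∪ A ×ˢ D := by
    ext t
    simp [A, D, maj3_eq_iff]
  have hdisj : Disjoint ((univ : Finset ι) ×ˢ A ×ˢ A) (A ×ˢ D) := by
    rw [disjoint_left]
    grind
  rw [hsplit, card_union_of_disjoint hdisj, card_product, card_product, card_product, card_univ,
    sq]

end Counting

section ThreeMajority

variable {n k : ℕ} (a : Fin n → Fin k)

theorem stepE_eq_expect (f : (Fin n → Fin k) → ℝ) : stepE a f = 𝔼 S, f (stepA a S) := by
  rw [stepE, Fintype.expect_eq_sum_div_card, Nat.card_eq_fintype_card]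

theorem stepE_cnt_eq_mul_div (j : Fin k) :
    stepE a (fun b => (cnt b j : ℝ)) =
      n * (#{t : Fin n × Fin n × Fin n | maj3 (a t.1) (a t.2.1) (a t.2.2) = j} / n ^ 3) := by
  calc stepE a (fun b => (cnt b j : ℝ))
      = Fintype.card (Fin n) *
          (#{t : Fin n × Fin n × Fin n | maj3 (a t.1) (a t.2.1) (a t.2.2) = j} /
            Fintype.card (Fin n × Fin n × Fin n)) :=
        (stepE_eq_expect a _).trans <| expect_card_filter_apply
          fun t : Fin n × Fin n × Fin n => maj3 (a t.1) (a t.2.1) (a t.2.2) = j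
    _ = _ := by simp [pow_succ']

end ThreeMajority

theorem mu_max_eq_general {n k : ℕ} (hn : 1 ≤ n) (a : Fin n → Fin k) (j : Fin k) :
    stepE a (fun b => (cnt b j : ℝ)) =
      cnt a j * (1 + (n * cnt a j - ∑ h, (cnt a h : ℝ) ^ 2) / n ^ 2) := by
  have hn₀ : (n : ℝ) ≠ 0 := by positivity
  have hdisagree : (#{q : Fin n × Fin n | a q.1 ≠ a q.2} : ℝ) =
      n ^ 2 - ∑ h, (cnt a h : ℝ) ^ 2 := by
    rw [eq_sub_iff_add_eq]
    simpa [cnt] using congrArg (Nat.cast (R := ℝ)) (card_filter_apply_fst_ne_add_sum_sq a)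
  have hadopt : (#{t : Fin n × Fin n × Fin n | maj3 (a t.1) (a t.2.1) (a t.2.2) = j} : ℝ) =
      n * cnt a j ^ 2 + cnt a j * (n ^ 2 - ∑ h, (cnt a h : ℝ) ^ 2) := by
    rw [card_filter_maj3_eq, ← hdisagree, Fintype.card_fin]
    push_cast
    rfl
  rw [stepE_cnt_eq_mul_div, hadopt]
  field_simp
  ring

/-- Lemma (3maj-max-expected), part (a): for every `m ∈ M(c̄)`,
`μ_m(c̄) = c_m·(1 + γ(c̄) + α(c̄))`. -/
theorem mu_max_eq (n k : ℕ) (hn : 1 ≤ n) (c : Fin k → ℕ) (hc : ∑ h, c h = n)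
    (a : Fin n → Fin k) (ha : ∀ h, cnt a h = c h) (m : Fin k) (hm : m ∈ Mset c) :
    stepE a (fun b => (cnt b m : ℝ)) = (c m : ℝ) * (1 + gammaV n c + alphaV n c) := by
  have hmax : c m = mval c := (mem_filter.mp hm).2
  simp only [mu_max_eq_general hn, ha, gammaV, ← hmax, add_assoc, sub_add_cancel]
end

section
/- (Increasing rate of the bias.) Let c̄ be a k-cd for n nodes (n ≥ 1) with M(c̄) = {m} for some m ∈ [k]. Then for every j ∈ [k] ∖ {m}, Pr[ C_{m,t+1} − C_{j,t+1} ≤ s(c̄)·(1 + γ(c̄)) + c_m·α(c̄)/2 | C_t = c̄ ] ≤ exp(−c_m·α(c̄)²/25). -/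
open Finset

/-!
One step of the dynamics is a sum of `n` independent contributions: a node adds `1` to the gap
`C_m - C_j` if it adopts `m`, subtracts `1` if it adopts `j`, and leaves it unchanged otherwise.
With `x_h = c_h / n` and `q = ∑ h, x_h ^ 2`, a node adopts `h` with probability
`x_h * (1 + x_h - q)`. Hence the expected gap is at least `s * (1 + γ) + c_m * α`, which exceeds
the threshold by `c_m * α / 2`, while the contributions have total second moment at most
`5 / 2 * c_m`. A Bernstein bound with parameter `α / 5` then gives the exponent
`-1 / 10 + 3 / 5 * (5 / 2) / 25 = -1 / 25` times `c_m * α ^ 2`.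
-/

open scoped BigOperators

section UniformSampling

variable {Ω : Type*} [Fintype Ω]

/-- The probability of `E` under the uniform distribution on `Ω`, as a ratio of cardinalities so
that `stepPr` is an instance of it by definition. -/
noncomputable def uniformProb (E : Ω → Prop) : ℝ :=
  (Nat.card {ω // E ω} : ℝ) / Nat.card Ω

lemma uniformProb_eq_expect (E : Ω → Prop) [DecidablePred E] :
    uniformProb E = 𝔼 ω, if E ω then (1 : ℝ) else 0 := by
  rw [uniformProb, Fintype.expect_eq_sum_div_card, Finset.sum_boole, Nat.card_eq_fintype_card,
    Nat.card_eq_fintype_card, Fintype.card_subtype]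

lemma uniformProb_le_expect {E : Ω → Prop} {f : Ω → ℝ} (hf : ∀ ω, 0 ≤ f ω)
    (hE : ∀ ω, E ω → 1 ≤ f ω) : uniformProb E ≤ 𝔼 ω, f ω := by
  classical
  rw [uniformProb_eq_expect]
  refine Finset.expect_le_expect fun ω _ => ?_
  split_ifs with h
  exacts [hE ω h, hf ω]

lemma expect_exp_mul_sum (X : Ω → ℝ) (l : ℝ) (n : ℕ) :
    𝔼 S : Fin n → Ω, Real.exp (l * ∑ i, X (S i)) = (𝔼 ω, Real.exp (l * X ω)) ^ n := by
  simp only [Finset.expect_pow, Fintype.piFinset_univ, Finset.mul_sum, Real.exp_sum]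

lemma uniformProb_sum_le_le_mgf (X : Ω → ℝ) {l : ℝ} (hl : 0 ≤ l) (n : ℕ) (T : ℝ) :
    uniformProb (fun S : Fin n → Ω => ∑ i, X (S i) ≤ T) ≤
      Real.exp (l * T) * (𝔼 ω, Real.exp (-l * X ω)) ^ n := by
  rw [← expect_exp_mul_sum, Finset.mul_expect]
  refine uniformProb_le_expect (fun S => by positivity) fun S hS => ?_
  rw [← Real.exp_add, Real.one_le_exp_iff]
  linarith [mul_le_mul_of_nonneg_left hS hl]

-- The cubic Taylor remainder `2 / 9 * |y| ^ 3` is at most `y ^ 2 / 10` for `|y| ≤ 9 / 20`.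
lemma exp_le_one_add_add_sq {y : ℝ} (hy : |y| ≤ 9 / 20) :
    Real.exp y ≤ 1 + y + 3 / 5 * y ^ 2 := by
  have taylor := (abs_le.1 (Real.exp_bound (hy.trans (by norm_num)) (n := 3) (by norm_num))).2
  have cubic : |y| ^ 3 ≤ 9 / 20 * y ^ 2 := by
    rw [pow_succ', sq_abs]
    gcongr
  norm_num [Finset.sum_range_succ, Nat.factorial] at taylor
  linarith

lemma expect_exp_mul_le [Nonempty Ω] {X : Ω → ℝ} (hX : ∀ ω, |X ω| ≤ 1) {l : ℝ}
    (hl : |l| ≤ 9 / 20) :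
    𝔼 ω, Real.exp (l * X ω) ≤ Real.exp (l * 𝔼 ω, X ω + 3 / 5 * l ^ 2 * 𝔼 ω, X ω ^ 2) := by
  have abs_mul_le (ω : Ω) : |l * X ω| ≤ 9 / 20 := by
    rw [abs_mul]
    exact (mul_le_of_le_one_right (abs_nonneg l) (hX ω)).trans hl
  calc 𝔼 ω, Real.exp (l * X ω)
      ≤ 𝔼 ω, (1 + l * X ω + 3 / 5 * (l * X ω) ^ 2) :=
        Finset.expect_le_expect fun ω _ => exp_le_one_add_add_sq (abs_mul_le ω)
    _ = (l * 𝔼 ω, X ω + 3 / 5 * l ^ 2 * 𝔼 ω, X ω ^ 2) + 1 := by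
        simp only [Finset.expect_add_distrib, Fintype.expect_const, ← Finset.mul_expect, mul_pow]
        ring
    _ ≤ _ := Real.add_one_le_exp _

lemma uniformProb_sum_le_le_exp [Nonempty Ω] {X : Ω → ℝ} (hX : ∀ ω, |X ω| ≤ 1) {l : ℝ}
    (hl₀ : 0 ≤ l) (hl : l ≤ 9 / 20) (n : ℕ) (T : ℝ) :
    uniformProb (fun S : Fin n → Ω => ∑ i, X (S i) ≤ T) ≤
      Real.exp (l * T + n * (-l * 𝔼 ω, X ω + 3 / 5 * l ^ 2 * 𝔼 ω, X ω ^ 2)) := by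
  refine (uniformProb_sum_le_le_mgf X hl₀ n T).trans ?_
  rw [Real.exp_add, Real.exp_nat_mul]
  gcongr
  rw [← neg_sq l]
  exact expect_exp_mul_le hX (by rwa [abs_neg, abs_of_nonneg hl₀])

end UniformSampling

section Coloring

variable {n k : ℕ} (a : Fin n → Fin k)

/-- The fraction `c_h / n` of nodes with color `h`; it is `0` for `n = 0`. -/
noncomputable def colorFrac (h : Fin k) : ℝ := cnt a h / n

/-- The probability `∑ h, (c_h / n) ^ 2` that two independent uniform nodes have the same color. -/
noncomputable def collisionProb : ℝ := ∑ h, colorFrac a h ^ 2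

/-- The probability that a given node has color `h` after one step of the 3-majority dynamics. -/
noncomputable def adoptProb (h : Fin k) : ℝ :=
  𝔼 t : Fin n × Fin n × Fin n, if maj3 (a t.1) (a t.2.1) (a t.2.2) = h then 1 else 0

lemma colorFrac_nonneg (h : Fin k) : 0 ≤ colorFrac a h := by
  unfold colorFrac
  positivity

lemma sq_colorFrac_le_collisionProb (h : Fin k) : colorFrac a h ^ 2 ≤ collisionProb a :=
  Finset.single_le_sum (f := fun h => colorFrac a h ^ 2) (fun _ _ => sq_nonneg _)
    (Finset.mem_univ h)

lemma cnt_eq_sum_ite (h : Fin k) : (cnt a h : ℝ) = ∑ i, if a i = h then 1 else 0 :=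
  (Finset.sum_boole _ _).symm

lemma expect_ite_color_eq (h : Fin k) :
    𝔼 i, (if a i = h then (1 : ℝ) else 0) = colorFrac a h := by
  rw [Fintype.expect_eq_sum_div_card, ← cnt_eq_sum_ite, Fintype.card_fin, colorFrac]

lemma expect_comp_color (f : Fin k → ℝ) : 𝔼 i, f (a i) = ∑ h, colorFrac a h * f h := by
  calc 𝔼 i, f (a i) = 𝔼 i, ∑ h, (if a i = h then 1 else 0) * f h := by simp
    _ = ∑ h, colorFrac a h * f h := by
        simp only [Finset.expect_sum_comm, ← Finset.expect_mul, expect_ite_color_eq]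

lemma expect_ite_color_eq_color :
    𝔼 y, 𝔼 z, (if a y = a z then (1 : ℝ) else 0) = collisionProb a := by
  have match_color (y : Fin n) :
      𝔼 z, (if a y = a z then (1 : ℝ) else 0) = colorFrac a (a y) := by
    simp only [← expect_ite_color_eq, eq_comm (a := a y)]
  simp only [match_color, expect_comp_color a (colorFrac a), collisionProb, sq]

lemma ite_maj3_eq (x y z h : Fin k) :
    (if maj3 x y z = h then (1 : ℝ) else 0) =
      (if x = h then 1 else 0) * (1 - if y = z then 1 else 0) +
        (if y = h then 1 else 0) * (if z = h then 1 else 0) := by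
  unfold maj3
  split_ifs <;> simp_all

variable [NeZero n]

lemma cnt_eq_mul_colorFrac (h : Fin k) : (cnt a h : ℝ) = n * colorFrac a h :=
  (mul_div_cancel₀ _ (NeZero.ne _)).symm

lemma sum_colorFrac : ∑ h, colorFrac a h = 1 := by
  simpa using (expect_comp_color a fun _ => 1).symm

lemma colorFrac_le_one (h : Fin k) : colorFrac a h ≤ 1 :=
  sum_colorFrac a ▸ Finset.single_le_sum (fun h _ => colorFrac_nonneg a h) (Finset.mem_univ h)

lemma adoptProb_eq (h : Fin k) :
    adoptProb a h = colorFrac a h * (1 + colorFrac a h - collisionProb a) := by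
  have last_two_differ : 𝔼 x, 𝔼 y, 𝔼 z,
      ((if a x = h then (1 : ℝ) else 0) * (1 - if a y = a z then 1 else 0)) =
        colorFrac a h * (1 - collisionProb a) := by
    simp only [← Finset.mul_expect, ← Finset.expect_mul, Finset.expect_sub_distrib,
      Fintype.expect_const, expect_ite_color_eq, expect_ite_color_eq_color]
  have last_two_match : 𝔼 _x : Fin n, 𝔼 y, 𝔼 z,
      ((if a y = h then (1 : ℝ) else 0) * (if a z = h then 1 else 0)) = colorFrac a h ^ 2 := by
    simp only [← Finset.mul_expect, ← Finset.expect_mul, Fintype.expect_const,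
      expect_ite_color_eq, sq]
  simp only [adoptProb, ite_maj3_eq, ← Finset.univ_product_univ, Finset.expect_product,
    Finset.expect_add_distrib, last_two_differ, last_two_match]
  ring

lemma adoptProb_le (h : Fin k) : adoptProb a h ≤ 5 / 4 * colorFrac a h := by
  have factor_le : 1 + colorFrac a h - collisionProb a ≤ 5 / 4 := by
    linarith [sq_colorFrac_le_collisionProb a h, sq_nonneg (colorFrac a h - 1 / 2)]
  rw [adoptProb_eq, mul_comm]
  exact mul_le_mul_of_nonneg_right factor_le (colorFrac_nonneg a h)

lemma mul_adoptProb_add_adoptProb_le {h h' : Fin k} (hle : cnt a h' ≤ cnt a h) :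
    n * (adoptProb a h + adoptProb a h') ≤ 5 / 2 * cnt a h := by
  have frac_le : colorFrac a h' ≤ colorFrac a h := by
    unfold colorFrac
    gcongr
  calc n * (adoptProb a h + adoptProb a h')
      ≤ n * (5 / 2 * colorFrac a h) := by
        gcongr
        linarith [adoptProb_le a h, adoptProb_le a h']
    _ = 5 / 2 * cnt a h := by rw [cnt_eq_mul_colorFrac, mul_left_comm]

lemma collisionProb_le_one : collisionProb a ≤ 1 := by
  rw [← sum_colorFrac a]
  exact Finset.sum_le_sum fun h _ =>
    pow_le_of_le_one (colorFrac_nonneg a h) (colorFrac_le_one a h) two_ne_zero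

lemma stepPr_cnt_sub_cnt_le_le_exp {m j : Fin k} (hj : j ≠ m) {l : ℝ} (hl₀ : 0 ≤ l)
    (hl : l ≤ 9 / 20) (T : ℝ) :
    stepPr a (fun b => (cnt b m : ℝ) - cnt b j ≤ T) ≤
      Real.exp (l * T + n * (-l * (adoptProb a m - adoptProb a j) +
        3 / 5 * l ^ 2 * (adoptProb a m + adoptProb a j))) := by
  let ind (h : Fin k) (t : Fin n × Fin n × Fin n) : ℝ :=
    if maj3 (a t.1) (a t.2.1) (a t.2.2) = h then 1 else 0
  have abs_le_one (t) : |ind m t - ind j t| ≤ 1 := by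
    dsimp only [ind]
    split_ifs <;> norm_num
  have sq_eq (t) : (ind m t - ind j t) ^ 2 = ind m t + ind j t := by
    dsimp only [ind]
    split_ifs with hm hj'
    exacts [absurd (hj'.symm.trans hm) hj, by norm_num, by norm_num, by norm_num]
  have gap_eq (S : Sample n) :
      (cnt (stepA a S) m : ℝ) - cnt (stepA a S) j = ∑ i, (ind m (S i) - ind j (S i)) := by
    rw [Finset.sum_sub_distrib, cnt_eq_sum_ite, cnt_eq_sum_ite]
    rfl
  have bernstein := uniformProb_sum_le_le_exp abs_le_one hl₀ hl n T
  simp only [sq_eq, Finset.expect_sub_distrib, Finset.expect_add_distrib, ← gap_eq] at bernstein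
  exact bernstein

end Coloring

section Bias

lemma mval_eq_of_Mset_eq_singleton {k : ℕ} {c : Fin k → ℕ} {m : Fin k} (hM : Mset c = {m}) :
    mval c = c m :=
  (Finset.mem_filter.1 (hM ▸ Finset.mem_singleton_self m)).2.symm

lemma add_sval_le_of_Mset_eq_singleton {k : ℕ} {c : Fin k → ℕ} {m j : Fin k}
    (hM : Mset c = {m}) (hj : j ≠ m) : c j + sval c ≤ c m := by
  have le_max : c j ≤ c m := mval_eq_of_Mset_eq_singleton hM ▸ Finset.le_sup (Finset.mem_univ j)
  have le_second : c j ≤ (Finset.univ \ Mset c).sup c := Finset.le_sup (by simp [hM, hj])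
  have sval_eq : sval c = c m - (Finset.univ \ Mset c).sup c := by
    simp [sval, hM, mval_eq_of_Mset_eq_singleton hM]
  omega

lemma sval_le_mval {k : ℕ} (c : Fin k → ℕ) : sval c ≤ mval c := by
  unfold sval
  split_ifs <;> omega

/-- In fractions of `n`: `x` and `y` are the sizes of the plurality color and of a competitor, `u`
is the bias and `q` the collision probability, so that `(1 - x) * u` is `α`. -/
lemma bias_add_gain_le {x y u q : ℝ} (hy : 0 ≤ y) (hu : 0 ≤ u) (hyu : y + u ≤ x) (hq : q ≤ 1) :
    u * (1 + (x - q - (1 - x) * u)) + x * ((1 - x) * u) ≤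
      x * (1 + x - q) - y * (1 + y - q) := by
  have excess_gap : 0 ≤ (x - y - u) * ((1 - q) + (x + y - u)) :=
    mul_nonneg (by linarith) (by linarith)
  have excess_bias : 0 ≤ u * x * (x - u) :=
    mul_nonneg (mul_nonneg hu (by linarith)) (by linarith)
  linear_combination excess_gap + excess_bias

variable {n k : ℕ} (a : Fin n → Fin k) {m j : Fin k}

lemma mval_cnt_le : mval (cnt a) ≤ n :=
  Finset.sup_le fun _ _ => (Finset.card_filter_le _ _).trans_eq (Finset.card_fin n)

lemma alphaV_cnt_nonneg : 0 ≤ alphaV n (cnt a) :=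
  div_nonneg (mul_nonneg (sub_nonneg.2 (Nat.cast_le.2 (mval_cnt_le a))) (Nat.cast_nonneg _))
    (sq_nonneg _)

lemma alphaV_cnt_le_one : alphaV n (cnt a) ≤ 1 := by
  refine div_le_one_of_le₀ ?_ (sq_nonneg _)
  rw [sq]
  have sval_le : sval (cnt a) ≤ n := (sval_le_mval _).trans (mval_cnt_le a)
  gcongr
  exact sub_le_self _ (Nat.cast_nonneg _)

lemma colorFrac_add_sval_div_le (hM : Mset (cnt a) = {m}) (hj : j ≠ m) :
    colorFrac a j + sval (cnt a) / n ≤ colorFrac a m := by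
  rw [colorFrac, colorFrac, ← add_div]
  gcongr
  exact_mod_cast add_sval_le_of_Mset_eq_singleton hM hj

variable [NeZero n]

lemma alphaV_cnt (hm : mval (cnt a) = cnt a m) :
    alphaV n (cnt a) = (1 - colorFrac a m) * (sval (cnt a) / n) := by
  have hn : (n : ℝ) ≠ 0 := NeZero.ne _
  rw [alphaV, hm, colorFrac]
  field_simp

lemma gammaV_cnt (hm : mval (cnt a) = cnt a m) :
    gammaV n (cnt a) = colorFrac a m - collisionProb a - alphaV n (cnt a) := by
  have hn : (n : ℝ) ≠ 0 := NeZero.ne _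
  simp only [gammaV, hm, collisionProb, colorFrac, div_pow, ← Finset.sum_div]
  field_simp

lemma bias_growth_add_le_expected_gap (hM : Mset (cnt a) = {m}) (hj : j ≠ m) :
    sval (cnt a) * (1 + gammaV n (cnt a)) + cnt a m * alphaV n (cnt a) ≤
      n * (adoptProb a m - adoptProb a j) := by
  have hm := mval_eq_of_Mset_eq_singleton hM
  have drift := bias_add_gain_le (colorFrac_nonneg a j) (by positivity)
    (colorFrac_add_sval_div_le a hM hj) (collisionProb_le_one a)
  rw [← alphaV_cnt a hm, ← gammaV_cnt a hm, ← adoptProb_eq, ← adoptProb_eq] at drift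
  calc (sval (cnt a) : ℝ) * (1 + gammaV n (cnt a)) + cnt a m * alphaV n (cnt a)
      = n * (sval (cnt a) / n * (1 + gammaV n (cnt a)) +
          colorFrac a m * alphaV n (cnt a)) := by
        have hn : (n : ℝ) ≠ 0 := NeZero.ne _
        rw [cnt_eq_mul_colorFrac]
        field_simp
    _ ≤ n * (adoptProb a m - adoptProb a j) := by gcongr

end Bias

/-- Lemma (increasing rate of the bias): if `M(c̄) = {m}` then for every `j ≠ m`,
`Pr[C_{m,t+1} − C_{j,t+1} ≤ s(c̄)·(1 + γ(c̄)) + c_m·α(c̄)/2 | C_t = c̄] ≤ exp(−c_m·α(c̄)²/25)`. -/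
theorem gap_growth_prob (n k : ℕ) (hn : 1 ≤ n) (c : Fin k → ℕ) (hc : ∑ h, c h = n)
    (a : Fin n → Fin k) (ha : ∀ h, cnt a h = c h) (m : Fin k) (hM : Mset c = {m})
    (j : Fin k) (hj : j ≠ m) :
    stepPr a (fun b =>
        (cnt b m : ℝ) - (cnt b j : ℝ) ≤
          (sval c : ℝ) * (1 + gammaV n c) + (c m : ℝ) * alphaV n c / 2) ≤
      Real.exp (-((c m : ℝ) * (alphaV n c) ^ 2 / 25)) := by
  obtain rfl : c = cnt a := funext fun h => (ha h).symm
  have : NeZero n := ⟨by omega⟩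
  set α := alphaV n (cnt a)
  have α_nonneg : 0 ≤ α := alphaV_cnt_nonneg a
  have α_le_one : α ≤ 1 := alphaV_cnt_le_one a
  refine (stepPr_cnt_sub_cnt_le_le_exp a hj (l := α / 5) (by linarith) (by linarith) _).trans
    (Real.exp_le_exp.2 ?_)
  have drift := mul_le_mul_of_nonneg_left (bias_growth_add_le_expected_gap a hM hj) α_nonneg
  have cnt_le : cnt a j ≤ cnt a m :=
    (Nat.le_add_right _ _).trans (add_sval_le_of_Mset_eq_singleton hM hj)
  have second_moment :=
    mul_le_mul_of_nonneg_left (mul_adoptProb_add_adoptProb_le a cnt_le) (sq_nonneg α)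
  linear_combination drift / 5 + 3 / 125 * second_moment
end

section
/- Let c̄ be a k-cd for n nodes (n ≥ 1) with M(c̄) = {m} for some m ∈ [k]. Then Pr[ C_{m,t+1} ≤ c_m·(1 + γ(c̄) + α(c̄)/2) | C_t = c̄ ] ≤ exp(−c_m·α(c̄)²/11). -/
open Finset

/-!
An exact count of the sampled triples shows that `C_{h,t+1}` has mean
`c_h (1 + (n c_h - ∑ j, c_j ^ 2) / n ^ 2)`. For the leading color `m` this is `c_m (1 + γ + α)`, so
the event is a deviation of `c_m α / 2` below the mean. The number of nodes of color `m` is a sum of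
independent indicators, whose second moments add up to the mean, which is at most `5 c_m / 4`. The
lower tail of a sum of independent *nonnegative* variables is sub-Gaussian with variance proxy the
sum of the second moments, which bounds the probability by `exp (-c_m α ^ 2 / 10)`.
-/

section LowerTail

open MeasureTheory ProbabilityTheory

variable {Ω : Type*} [MeasurableSpace Ω] {μ : Measure Ω}

lemma exp_neg_le_one_sub_add_sq_div_two {x : ℝ} (hx : 0 ≤ x) :
    Real.exp (-x) ≤ 1 - x + x ^ 2 / 2 := by
  have h_pos : 0 < 1 + x + x ^ 2 / 2 := by positivity
  rw [Real.exp_neg]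
  refine (inv_anti₀ h_pos (Real.quadratic_le_exp_of_nonneg hx)).trans ?_
  have h_prod : (1 - x + x ^ 2 / 2) * (1 + x + x ^ 2 / 2) = 1 + (x ^ 2) ^ 2 / 4 := by ring
  rw [inv_le_iff_one_le_mul₀ h_pos, h_prod]
  linarith [sq_nonneg (x ^ 2)]

lemma integrable_exp_neg_mul_of_nonneg [IsFiniteMeasure μ] {X : Ω → ℝ} (hX : 0 ≤ᵐ[μ] X)
    (hXm : AEMeasurable X μ) {t : ℝ} (ht : 0 ≤ t) :
    Integrable (fun ω => Real.exp (-t * X ω)) μ := by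
  refine .of_mem_Icc 0 1 (by fun_prop) ?_
  filter_upwards [hX] with ω hω
  exact ⟨(Real.exp_pos _).le, Real.exp_le_one_iff.2 (by simpa using mul_nonneg ht hω)⟩

lemma mgf_neg_le_exp_of_nonneg [IsProbabilityMeasure μ] {X : Ω → ℝ} (hX : 0 ≤ᵐ[μ] X)
    (hX2 : MemLp X 2 μ) {t : ℝ} (ht : 0 ≤ t) :
    mgf X μ (-t) ≤ Real.exp (-(t * ∫ ω, X ω ∂μ) + t ^ 2 / 2 * ∫ ω, X ω ^ 2 ∂μ) := by
  have h_int : Integrable X μ := hX2.integrable one_le_two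
  have h_int_sq : Integrable (fun ω => X ω ^ 2) μ := hX2.integrable_sq
  calc mgf X μ (-t)
      ≤ ∫ ω, (1 - t * X ω + t ^ 2 / 2 * X ω ^ 2) ∂μ := by
        refine integral_mono_ae
          (integrable_exp_neg_mul_of_nonneg hX hX2.aestronglyMeasurable.aemeasurable ht)
          (by fun_prop) ?_
        filter_upwards [hX] with ω hω
        have := exp_neg_le_one_sub_add_sq_div_two (mul_nonneg ht hω)
        rw [← neg_mul] at this
        linarith
    _ = -(t * ∫ ω, X ω ∂μ) + t ^ 2 / 2 * ∫ ω, X ω ^ 2 ∂μ + 1 := by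
        rw [integral_add (by fun_prop) (by fun_prop), integral_sub (by fun_prop) (by fun_prop)]
        simp only [integral_const_mul, integral_const, probReal_univ, smul_eq_mul]
        ring
    _ ≤ _ := Real.add_one_le_exp _

lemma mgf_sum_neg_le_exp_of_nonneg {ι : Type*} {X : ι → Ω → ℝ} (h_indep : iIndepFun X μ)
    (hX : ∀ i, 0 ≤ᵐ[μ] X i) (hX2 : ∀ i, MemLp (X i) 2 μ) (s : Finset ι) {t : ℝ} (ht : 0 ≤ t) :
    mgf (∑ i ∈ s, X i) μ (-t) ≤
      Real.exp (-(t * ∑ i ∈ s, ∫ ω, X i ω ∂μ) + t ^ 2 / 2 * ∑ i ∈ s, ∫ ω, X i ω ^ 2 ∂μ) := by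
  have := h_indep.isProbabilityMeasure
  calc mgf (∑ i ∈ s, X i) μ (-t)
      = ∏ i ∈ s, mgf (X i) μ (-t) :=
        h_indep.mgf_sum₀ (fun i => (hX2 i).aestronglyMeasurable.aemeasurable) s
    _ ≤ ∏ i ∈ s, Real.exp (-(t * ∫ ω, X i ω ∂μ) + t ^ 2 / 2 * ∫ ω, X i ω ^ 2 ∂μ) :=
        prod_le_prod (fun i _ => mgf_nonneg)
          fun i _ => mgf_neg_le_exp_of_nonneg (hX i) (hX2 i) ht
    _ = _ := by
        rw [← Real.exp_sum, sum_add_distrib, sum_neg_distrib, ← mul_sum, ← mul_sum]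

theorem measureReal_sum_le_sub_le_exp_of_nonneg {ι : Type*} {X : ι → Ω → ℝ}
    (h_indep : iIndepFun X μ) (hX : ∀ i, 0 ≤ᵐ[μ] X i) (hX2 : ∀ i, MemLp (X i) 2 μ)
    (s : Finset ι) {ε V : ℝ} (hε : 0 ≤ ε) (hV : ∑ i ∈ s, ∫ ω, X i ω ^ 2 ∂μ ≤ V) :
    μ.real {ω | ∑ i ∈ s, X i ω ≤ ∑ i ∈ s, ∫ ω, X i ω ∂μ - ε} ≤
      Real.exp (-(ε ^ 2 / (2 * V))) := by
  have := h_indep.isProbabilityMeasure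
  have hXm (i : ι) : AEMeasurable (X i) μ := (hX2 i).aestronglyMeasurable.aemeasurable
  have hV0 : 0 ≤ V := (sum_nonneg fun i _ => integral_nonneg fun ω => sq_nonneg _).trans hV
  have h_sum_nonneg : 0 ≤ᵐ[μ] ∑ i ∈ s, X i := by
    filter_upwards [(ae_ball_iff s.countable_toSet).2 fun i _ => hX i] with ω hω
    simpa using sum_nonneg hω
  -- The minimizer of the quadratic exponent `-t ε + t² V / 2`.
  set t := ε / V with ht_def
  have ht : 0 ≤ t := by positivity
  set E := ∑ i ∈ s, ∫ ω, X i ω ∂μ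
  calc μ.real {ω | ∑ i ∈ s, X i ω ≤ E - ε}
      ≤ Real.exp (t * (E - ε)) * mgf (∑ i ∈ s, X i) μ (-t) := by
        simpa using measure_le_le_exp_mul_mgf (E - ε) (neg_nonpos.2 ht)
          (integrable_exp_neg_mul_of_nonneg h_sum_nonneg (by fun_prop) ht)
    _ ≤ Real.exp (t * (E - ε)) * Real.exp (-(t * E) + t ^ 2 / 2 * V) := by
        grw [mgf_sum_neg_le_exp_of_nonneg h_indep hX hX2 s ht, hV]
    _ = Real.exp (-(ε ^ 2 / (2 * V))) := by
        rw [← Real.exp_add]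
        congr 1
        rcases hV0.eq_or_lt with rfl | hV_pos
        · simp [ht_def]
        · rw [ht_def]
          field_simp
          ring

end LowerTail

section Uniform

open MeasureTheory ProbabilityTheory

variable {Ω : Type*} [Finite Ω] [MeasurableSpace Ω] [MeasurableSingletonClass Ω]

lemma measureReal_uniformOn_univ (s : Set Ω) :
    (uniformOn Set.univ : Measure Ω).real s = (Nat.card s : ℝ) / Nat.card Ω := by
  cases nonempty_fintype Ω
  rw [measureReal_def, uniformOn_univ, Measure.count_apply s.toFinite.measurableSet,
    ← s.toFinite.cast_ncard_eq, ENat.toENNReal_coe, ENNReal.toReal_div,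
    ENNReal.toReal_natCast, ENNReal.toReal_natCast, Nat.card_coe_set_eq, Nat.card_eq_fintype_card]

lemma integral_uniformOn_univ {Ω : Type*} [Fintype Ω] [MeasurableSpace Ω]
    [MeasurableSingletonClass Ω] (f : Ω → ℝ) :
    ∫ ω, f ω ∂(uniformOn Set.univ : Measure Ω) = (∑ ω, f ω) / Nat.card Ω := by
  rw [integral_fintype .of_finite, sum_div]
  refine sum_congr rfl fun ω _ => ?_
  rw [measureReal_uniformOn_univ, Nat.card_unique, Nat.cast_one, smul_eq_mul, one_div_mul_eq_div]

variable {ι : Type*} [Fintype ι]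

lemma uniformOn_univ_eq_pi :
    (uniformOn Set.univ : Measure (ι → Ω)) = Measure.pi fun _ => uniformOn Set.univ := by
  rw [← uniformOn_pi, Set.pi_univ]

variable [DecidableEq Ω] [Nonempty Ω]

lemma integral_ite_mem_uniformOn {ι : Type*} [Finite ι] (A : Finset Ω) (i : ι) :
    ∫ S : ι → Ω, (if S i ∈ A then (1 : ℝ) else 0) ∂uniformOn Set.univ = #A / Nat.card Ω := by
  cases nonempty_fintype Ω
  cases nonempty_fintype ι
  rw [uniformOn_univ_eq_pi, integral_comp_eval (X := fun _ => Ω)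
      (f := fun ω => if ω ∈ A then (1 : ℝ) else 0) (measurable_of_finite _).aestronglyMeasurable,
    integral_uniformOn_univ, sum_boole, filter_univ_mem]

lemma integral_card_filter_mem_uniformOn (A : Finset Ω) :
    ∫ S : ι → Ω, (#{i | S i ∈ A} : ℝ) ∂uniformOn Set.univ =
      Fintype.card ι * (#A / Nat.card Ω) := by
  simp_rw [card_filter, Nat.cast_sum, Nat.cast_ite, Nat.cast_one, Nat.cast_zero]
  rw [integral_finsetSum _ fun _ _ => .of_finite]
  simp_rw [integral_ite_mem_uniformOn, sum_const, card_univ, nsmul_eq_mul]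

theorem measureReal_card_filter_mem_le_sub_le_exp (A : Finset Ω) {ε V : ℝ} (hε : 0 ≤ ε)
    (hV : Fintype.card ι * (#A / Nat.card Ω) ≤ V) :
    (uniformOn Set.univ).real
        {S : ι → Ω | (#{i | S i ∈ A} : ℝ) ≤ Fintype.card ι * (#A / Nat.card Ω) - ε} ≤
      Real.exp (-(ε ^ 2 / (2 * V))) := by
  let X (i : ι) (S : ι → Ω) : ℝ := if S i ∈ A then 1 else 0
  have h_sum (S : ι → Ω) : (#{i | S i ∈ A} : ℝ) = ∑ i, X i S := by simp [X]
  have h_mean : Fintype.card ι * (#A / Nat.card Ω : ℝ) =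
      ∑ i, ∫ S, X i S ∂uniformOn Set.univ := by
    simp [X, integral_ite_mem_uniformOn]
  have h_sq (i : ι) (S : ι → Ω) : X i S ^ 2 = X i S := by simp [X]
  have h_indep : iIndepFun X (uniformOn Set.univ) := by
    rw [uniformOn_univ_eq_pi]
    exact iIndepFun_pi (X := fun _ ω => if ω ∈ A then (1 : ℝ) else 0)
      fun _ => (measurable_of_finite _).aemeasurable
  simp_rw [h_sum, h_mean]
  refine measureReal_sum_le_sub_le_exp_of_nonneg h_indep
    (fun i => .of_forall fun S => ?_) (fun i => .of_discrete) univ hε ?_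
  · by_cases h : S i ∈ A <;> simp [X, h]
  · simpa only [h_sq, ← h_mean]

end Uniform

lemma card_filter_apply_eq_apply_eq_sum_sq {α β : Type*} [Fintype α] [Fintype β] [DecidableEq β]
    (f : α → β) :
    #{p : α × α | f p.1 = f p.2} = ∑ b, #{x | f x = b} ^ 2 := by
  rw [card_eq_sum_card_fiberwise (f := fun p => f p.1) (t := univ)
    fun _ _ => mem_coe.2 (mem_univ _)]
  refine sum_congr rfl fun b _ => ?_
  rw [sq, ← card_product]
  congr 1
  ext p
  simp only [mem_filter, mem_univ, true_and, mem_product]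
  grind

section Configuration

variable {k : ℕ}

/-- The relative growth `(n c_h - ∑ j, c_j ^ 2) / n ^ 2` of color `h` in mean over one step. It
equals `γ(c̄) + α(c̄)` when `h` attains the maximum. -/
noncomputable def growthRate (n : ℕ) (c : Fin k → ℕ) (h : Fin k) : ℝ :=
  ((n : ℝ) * c h - ∑ j, (c j : ℝ) ^ 2) / (n : ℝ) ^ 2

lemma growthRate_le_one_div_four (n : ℕ) (c : Fin k → ℕ) (h : Fin k) :
    growthRate n c h ≤ 1 / 4 := by
  have h_sq : (c h : ℝ) ^ 2 ≤ ∑ j, (c j : ℝ) ^ 2 :=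
    single_le_sum (f := fun j => (c j : ℝ) ^ 2) (fun _ _ => sq_nonneg _) (mem_univ h)
  refine div_le_of_le_mul₀ (by positivity) (by norm_num) ?_
  linarith [sq_nonneg ((n : ℝ) / 2 - c h)]

lemma gammaV_add_alphaV (n : ℕ) {c : Fin k → ℕ} {h : Fin k} (hh : c h = mval c) :
    gammaV n c + alphaV n c = growthRate n c h := by
  rw [gammaV, growthRate, hh, sub_add_cancel]

lemma mval_le_sum (c : Fin k → ℕ) : mval c ≤ ∑ h, c h :=
  Finset.sup_le fun h _ => single_le_sum (fun _ _ => Nat.zero_le _) (mem_univ h)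

lemma alphaV_nonneg {n : ℕ} {c : Fin k → ℕ} (hc : mval c ≤ n) : 0 ≤ alphaV n c :=
  div_nonneg (mul_nonneg (sub_nonneg.2 (mod_cast hc)) (Nat.cast_nonneg _)) (sq_nonneg _)

end Configuration

section Step

open MeasureTheory ProbabilityTheory

variable {n k : ℕ}

lemma stepPr_eq_measureReal (a : Fin n → Fin k) (E : (Fin n → Fin k) → Prop) :
    stepPr a E = (uniformOn Set.univ).real {S : Sample n | E (stepA a S)} := by
  rw [measureReal_uniformOn_univ]
  rfl

/-- The triples of nodes whose 3-majority color under the assignment `a` is `h`. -/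
def majTriples (a : Fin n → Fin k) (h : Fin k) : Finset (Fin n × Fin n × Fin n) :=
  {t | maj3 (a t.1) (a t.2.1) (a t.2.2) = h}

lemma cnt_stepA (a : Fin n → Fin k) (h : Fin k) (S : Sample n) :
    cnt (stepA a S) h = #{i | S i ∈ majTriples a h} :=
  congrArg card <| filter_congr fun i _ => by simp [stepA, majTriples]

-- The last two samples either both have color `h`, or differ and leave the choice to the first.
lemma card_majTriples (a : Fin n → Fin k) (h : Fin k) :
    #(majTriples a h) + cnt a h * ∑ j, cnt a j ^ 2 = n * cnt a h ^ 2 + cnt a h * n ^ 2 := by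
  set A : Finset (Fin n) := {i | a i = h} with hA
  set D : Finset (Fin n × Fin n) := {p | a p.1 = a p.2} with hD
  have h_card_D : #D = ∑ j, cnt a j ^ 2 := card_filter_apply_eq_apply_eq_sum_sq a
  have h_split : majTriples a h = univ ×ˢ (A ×ˢ A) ∪ A ×ˢ Dᶜ := by
    ext ⟨x, y, z⟩
    simp only [majTriples, maj3, hA, hD, mem_filter, mem_univ, true_and, mem_union, mem_product,
      mem_compl]
    grind
  have h_disj : Disjoint (univ ×ˢ (A ×ˢ A)) (A ×ˢ Dᶜ) := by
    simp only [disjoint_left, hA, hD, mem_product, mem_compl, mem_filter]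
    grind
  have h_compl : #Dᶜ + #D = n ^ 2 := by
    rw [card_compl_add_card, Fintype.card_prod, Fintype.card_fin, sq]
  rw [h_split, card_union_of_disjoint h_disj, ← h_card_D, ← h_compl]
  simp only [card_product, card_univ, Fintype.card_fin, cnt, ← hA]
  ring

variable [NeZero n]

lemma stepE_cnt_eq_card_majTriples (a : Fin n → Fin k) (h : Fin k) :
    stepE a (fun b => (cnt b h : ℝ)) = n * (#(majTriples a h) / (n : ℝ) ^ 3) := by
  have := integral_card_filter_mem_uniformOn (ι := Fin n) (majTriples a h)
  rw [integral_uniformOn_univ] at this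
  simpa [stepE, cnt_stepA, pow_succ, mul_assoc] using this

lemma stepE_cnt (a : Fin n → Fin k) (h : Fin k) :
    stepE a (fun b => (cnt b h : ℝ)) = cnt a h * (1 + growthRate n (cnt a) h) := by
  have h_card : (#(majTriples a h) : ℝ) + cnt a h * ∑ j, (cnt a j : ℝ) ^ 2 =
      n * cnt a h ^ 2 + cnt a h * n ^ 2 := mod_cast card_majTriples a h
  rw [stepE_cnt_eq_card_majTriples, eq_sub_of_add_eq h_card, growthRate]
  field_simp [NeZero.ne]
  ring

theorem stepPr_cnt_le_stepE_sub_le_exp (a : Fin n → Fin k) (h : Fin k) {ε V : ℝ} (hε : 0 ≤ ε)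
    (hV : stepE a (fun b => (cnt b h : ℝ)) ≤ V) :
    stepPr a (fun b => (cnt b h : ℝ) ≤ stepE a (fun b => (cnt b h : ℝ)) - ε) ≤
      Real.exp (-(ε ^ 2 / (2 * V))) := by
  have h_mean : (Fintype.card (Fin n) : ℝ) *
      (#(majTriples a h) / Nat.card (Fin n × Fin n × Fin n)) =
      stepE a (fun b => (cnt b h : ℝ)) := by
    rw [stepE_cnt_eq_card_majTriples]
    simp [pow_succ, mul_assoc]
  have h_tail := measureReal_card_filter_mem_le_sub_le_exp (ι := Fin n) (majTriples a h) hε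
    (h_mean.trans_le hV)
  simpa only [stepPr_eq_measureReal, h_mean, cnt_stepA] using h_tail

theorem stepPr_cnt_le_mul_le_exp (a : Fin n → Fin k) (h : Fin k) {δ : ℝ} (hδ : 0 ≤ δ) :
    stepPr a (fun b => (cnt b h : ℝ) ≤ cnt a h * (1 + growthRate n (cnt a) h - δ)) ≤
      Real.exp (-(2 / 5 * cnt a h * δ ^ 2)) := by
  have h_mean : stepE a (fun b => (cnt b h : ℝ)) ≤ 5 / 4 * cnt a h := by
    rw [stepE_cnt, mul_comm]
    gcongr
    linarith [growthRate_le_one_div_four n (cnt a) h]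
  have h_tail := stepPr_cnt_le_stepE_sub_le_exp a h (ε := cnt a h * δ) (by positivity) h_mean
  rw [stepE_cnt, ← mul_sub] at h_tail
  convert h_tail using 3
  rcases eq_or_ne (cnt a h : ℝ) 0 with h0 | h0
  · simp [h0]
  · field_simp
    norm_num [mul_comm]

end Step

/-- Lemma (3maj-max-prob): if `M(c̄) = {m}` then
`Pr[C_{m,t+1} ≤ c_m·(1 + γ(c̄) + α(c̄)/2) | C_t = c̄] ≤ exp(−c_m·α(c̄)²/11)`. -/
theorem max_growth_prob (n k : ℕ) (hn : 1 ≤ n) (c : Fin k → ℕ) (hc : ∑ h, c h = n)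
    (a : Fin n → Fin k) (ha : ∀ h, cnt a h = c h) (m : Fin k) (hM : Mset c = {m}) :
    stepPr a (fun b =>
        (cnt b m : ℝ) ≤ (c m : ℝ) * (1 + gammaV n c + alphaV n c / 2)) ≤
      Real.exp (-((c m : ℝ) * (alphaV n c) ^ 2 / 11)) := by
  obtain rfl : cnt a = c := funext ha
  have : NeZero n := ⟨Nat.one_le_iff_ne_zero.1 hn⟩
  have h_max : cnt a m = mval (cnt a) := (mem_filter.1 (hM.ge (mem_singleton_self m))).2
  have hα : 0 ≤ alphaV n (cnt a) := alphaV_nonneg ((mval_le_sum _).trans_eq hc)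
  have h_threshold : 1 + gammaV n (cnt a) + alphaV n (cnt a) / 2 =
      1 + growthRate n (cnt a) m - alphaV n (cnt a) / 2 := by
    rw [← gammaV_add_alphaV n h_max]
    ring
  rw [h_threshold]
  refine (stepPr_cnt_le_mul_le_exp a m (by positivity)).trans (Real.exp_le_exp.2 ?_)
  have : 0 ≤ (cnt a m : ℝ) * alphaV n (cnt a) ^ 2 := by positivity
  linarith
end
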